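/- For every binary string w : List Bool, writing (p₁, q₁), (p₂, q₂), (p₃, q₃) for the numerator-denominator pairs of (MT w).1, (MT w).2 and mf(w) respectively, one has p₂·q₁ − p₁·q₂ = 3·q₁·q₂ − q₃, and moreover q₃ divides q₁² + q₂² with (q₁² + q₂²)/q₃ = 3·q₁·q₂ − q₃. -/

import Mathlib

/-!
For rationals `x = p₁ / q₁` and `y = p₂ / q₂` put `d = p₂ q₁ - p₁ q₂`. Along the tree, `d` is
positive and `(d, q₁, q₂)` is a pairwise coprime solution of Markov's equation
`d² + q₁² + q₂² = 3 d q₁ q₂`; this is the invariant `MarkovPair`.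

Given the invariant, `d` divides `q₁² + q₂²` with quotient `q₃ = 3 q₁ q₂ - d`. It also divides
`p₁ q₁ + p₂ q₂`, because `q₁ (p₁ q₁ + p₂ q₂) = p₁ (q₁² + q₂²) + q₂ d` and `d` is coprime to `q₁`;
let `p₃` be the quotient. Then `p₃ q₁ - p₁ q₃ = q₂` and `p₂ q₃ - p₃ q₂ = q₁`, so `p₃ / q₃` is
in lowest terms (as `q₁` and `q₂` are coprime) and is the Springborn mediant of `x` and `y`
(`MarkovPair.sm_spec`). The same two identities show that passing to a child replaces the triple
`(d, q₁, q₂)` by `(q₂, q₁, q₃)` or `(q₁, q₃, q₂)`, so the invariant persists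
(`MarkovPair.left`, `MarkovPair.right`). The relations claimed are then
`d = 3 q₁ q₂ - q₃` and `d q₃ = q₁² + q₂²`.
-/

/-- The Springborn mediant of two rationals. -/
def sm (x y : ℚ) : ℚ :=
  ((x.num * x.den + y.num * y.den : ℤ) : ℚ) / ((x.den ^ 2 + y.den ^ 2 : ℕ) : ℚ)

/-- The Markov fraction tree: `MT []  = (0, 1/2)`, and for `MT w = (x, y)`,
`MT (w ++ [false]) = (x, sm x y)` and `MT (w ++ [true]) = (sm x y, y)`. -/
def MT (w : List Bool) : ℚ × ℚ :=
  w.foldl (fun p b => if b then (sm p.1 p.2, p.2) else (p.1, sm p.1 p.2)) (0, 1/2)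

/-- The Markov fraction at node `w`. -/
def mf (w : List Bool) : ℚ := sm (MT w).1 (MT w).2

/-- The determinant `p₂ q₁ - p₁ q₂` of two rationals `p₁ / q₁` and `p₂ / q₂` in lowest terms. -/
def fracDet (x y : ℚ) : ℤ := y.num * x.den - x.num * y.den

/-- The determinant of `x` and `y` is positive and forms, together with their denominators, a
pairwise coprime solution of Markov's equation. -/
structure MarkovPair (x y : ℚ) : Prop where
  pos : 0 < fracDet x y
  eqn : fracDet x y ^ 2 + (x.den : ℤ) ^ 2 + (y.den : ℤ) ^ 2 =
    3 * fracDet x y * x.den * y.den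
  cop_left : IsCoprime (fracDet x y) (x.den : ℤ)
  cop_right : IsCoprime (fracDet x y) (y.den : ℤ)
  cop_den : IsCoprime (x.den : ℤ) (y.den : ℤ)

/-- The numerator and denominator of the mediant, in terms of the determinants with its two
neighbours: these are the denominators of the opposite neighbours. -/
theorem MarkovPair.sm_spec {x y : ℚ} (h : MarkovPair x y) :
    ((sm x y).den : ℤ) = 3 * x.den * y.den - fracDet x y ∧
    fracDet x (sm x y) = y.den ∧ fracDet (sm x y) y = x.den := by
  obtain ⟨hpos, heq, hl, hr, hd⟩ := h
  have hq1 : (0 : ℤ) < x.den := by exact_mod_cast x.den_pos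
  have hq2 : (0 : ℤ) < y.den := by exact_mod_cast y.den_pos
  have hdef : fracDet x y = y.num * x.den - x.num * y.den := rfl
  have hsm : sm x y = ((x.num * x.den + y.num * y.den : ℤ) : ℚ) /
      (((x.den : ℤ) ^ 2 + (y.den : ℤ) ^ 2 : ℤ) : ℚ) := by
    simp [sm]
  simp only [fracDet.eq_1 x (sm x y), fracDet.eq_1 (sm x y) y]
  generalize fracDet x y = d at *
  generalize (x.den : ℤ) = q₁ at *
  generalize (y.den : ℤ) = q₂ at *
  generalize x.num = p₁ at *
  generalize y.num = p₂ at *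
  obtain ⟨q₃, hq3⟩ : ∃ q₃, q₃ = 3 * q₁ * q₂ - d := ⟨_, rfl⟩
  have hdq : d * q₃ = q₁ ^ 2 + q₂ ^ 2 := by rw [hq3]; linear_combination -heq
  have hq3pos : 0 < q₃ := by
    have : 0 < d * q₃ := by rw [hdq]; positivity
    exact pos_of_mul_pos_right this hpos.le
  obtain ⟨p₃, hp3⟩ : d ∣ p₁ * q₁ + p₂ * q₂ := by
    apply hl.dvd_of_dvd_mul_left
    exact ⟨p₁ * q₃ + q₂, by linear_combination (-p₁) * hdq - q₂ * hdef⟩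
  have e1 : p₃ * q₁ - p₁ * q₃ = q₂ := by
    apply mul_left_cancel₀ hpos.ne'
    linear_combination (-q₁) * hp3 - p₁ * hdq - q₂ * hdef
  have e2 : p₂ * q₃ - p₃ * q₂ = q₁ := by
    apply mul_left_cancel₀ hpos.ne'
    linear_combination q₂ * hp3 + p₂ * hdq - q₁ * hdef
  have hcop : IsCoprime p₃ q₃ := by
    obtain ⟨a, b, hab⟩ := hd
    exact ⟨b * q₁ - a * q₂, a * p₂ - b * p₁, by linear_combination hab + a * e2 + b * e1⟩
  have hsm' : sm x y = (p₃ : ℚ) / (q₃ : ℚ) := by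
    rw [hsm, hp3, ← hdq]
    push_cast
    exact mul_div_mul_left _ _ (by exact_mod_cast hpos.ne')
  have hc' := Int.isCoprime_iff_nat_coprime.mp hcop
  have hnum : (sm x y).num = p₃ := by
    rw [hsm']; exact Rat.num_div_eq_of_coprime hq3pos hc'
  have hden : ((sm x y).den : ℤ) = q₃ := by
    rw [hsm']; exact Rat.den_div_eq_of_coprime hq3pos hc'
  rw [hnum, hden]
  exact ⟨hq3, e1, e2⟩

theorem MarkovPair.left {x y : ℚ} (h : MarkovPair x y) : MarkovPair x (sm x y) := by
  obtain ⟨hden, hL, -⟩ := h.sm_spec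
  obtain ⟨hpos, heq, hl, hr, hd⟩ := h
  refine ⟨?_, ?_, ?_, ?_, ?_⟩
  · rw [hL]; exact_mod_cast y.den_pos
  · rw [hL, hden]; linear_combination heq
  · rw [hL]; exact hd.symm
  · rw [hL, hden]
    obtain ⟨a, b, hab⟩ := hr
    exact ⟨b + a * 3 * x.den, -a, by linear_combination hab⟩
  · rw [hden]
    obtain ⟨a, b, hab⟩ := hl
    exact ⟨b + a * 3 * y.den, -a, by linear_combination hab⟩

theorem MarkovPair.right {x y : ℚ} (h : MarkovPair x y) : MarkovPair (sm x y) y := by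
  have hleft := h.left
  obtain ⟨hden, hL, hR⟩ := h.sm_spec
  refine ⟨?_, ?_, ?_, ?_, ?_⟩
  · rw [hR]; exact_mod_cast x.den_pos
  · rw [hR, hden]; linear_combination h.eqn
  · rw [hR]; exact hleft.cop_den
  · rw [hR]; exact h.cop_den
  · rw [← hL]; exact hleft.cop_right.symm

theorem markovPair_root : MarkovPair 0 (1 / 2) := by
  have h1 : (1 / 2 : ℚ).num = 1 := by norm_num
  have h2 : (1 / 2 : ℚ).den = 2 := by norm_num
  have h3 : fracDet 0 (1 / 2) = 1 := by simp only [fracDet, h1, h2]; norm_num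
  refine ⟨?_, ?_, ?_, ?_, ?_⟩ <;> simp only [h2, h3, Rat.den_ofNat] <;> norm_num

theorem markovPair_MT (w : List Bool) : MarkovPair (MT w).1 (MT w).2 := by
  -- The recursion of `MT` appends at the end of the word.
  induction w using List.reverseRecOn with
  | nil => exact markovPair_root
  | append_singleton w b ih =>
    have hstep : MT (w ++ [b]) =
        if b then (sm (MT w).1 (MT w).2, (MT w).2) else ((MT w).1, sm (MT w).1 (MT w).2) := by
      simp [MT, List.foldl_append]
    rw [hstep]
    cases b
    · exact ih.left
    · exact ih.right

/-- Relation (8): `p₂q₁ − p₁q₂ = (q₁² + q₂²)/q₃ = 3q₁q₂ − q₃` for the three Markov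
fractions around a node of the tree. -/
theorem markov_fraction_relation_three (w : List Bool) :
    ((MT w).2).num * (((MT w).1).den : ℤ) - ((MT w).1).num * (((MT w).2).den : ℤ) =
      3 * (((MT w).1).den : ℤ) * (((MT w).2).den : ℤ) - ((mf w).den : ℤ) ∧
    ((mf w).den : ℤ) ∣ (((MT w).1).den : ℤ) ^ 2 + (((MT w).2).den : ℤ) ^ 2 ∧
    ((((MT w).1).den : ℤ) ^ 2 + (((MT w).2).den : ℤ) ^ 2) / ((mf w).den : ℤ) =
      3 * (((MT w).1).den : ℤ) * (((MT w).2).den : ℤ) - ((mf w).den : ℤ) := by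
  have h := markovPair_MT w
  obtain ⟨hden, -, -⟩ := h.sm_spec
  have heq := h.eqn
  change ((mf w).den : ℤ) = _ at hden
  have hne : ((mf w).den : ℤ) ≠ 0 := by exact_mod_cast (mf w).den_nz
  have hprod : ((MT w).1.den : ℤ) ^ 2 + ((MT w).2.den : ℤ) ^ 2 =
      (3 * ((MT w).1.den : ℤ) * ((MT w).2.den : ℤ) - ((mf w).den : ℤ)) * ((mf w).den : ℤ) := by
    rw [hden]; linear_combination heq
  refine ⟨?_, Dvd.intro_left _ hprod.symm, ?_⟩
  · change fracDet (MT w).1 (MT w).2 = _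
    rw [hden]; ring
  · rw [hprod, Int.mul_ediv_cancel _ hne]
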